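/- arXiv:2108.08147 — 2 statements merged into one kernel-verified Lean document; each statement's English description precedes it below -/
import Mathlib

section
/- Local error of the first step for semi-linear problems (Lemma A.2): Assume the weak CFL condition 7 c_inv c_M τ < 3 h and consistent initial data with ∂_τ p⁰ = ṗ(0). Then (1 − 2τC) ‖u¹ − u⁰‖_{A + η_Ω M}² + (1 − 2τC) ‖p¹ − p⁰‖_{A_Γ + η_Γ M_Γ}² + τ ( 1 − c_M h (1 + 8 τ² L_M) − (c_{α,M} τ h + c_A τ h⁻¹)(2 + 8 τ² L_A) ) ‖∂_τ p¹ − ṗ(0)‖_{M_Γ}² ≤ τ² ‖u̇(0)‖_{A + η_Ω M}² + τ² ‖ṗ(0)‖_{A_Γ + η_Γ M_Γ}² + 2 τ² ‖ṗ(0)‖_{A₂₂}² + 4 τ³ C ‖ṗ(0)‖_{A₂₂ + η_Ω M₂₂}² + 2 τ³ L, where C := max{2L_A, √(8L_M), L_{A_Γ}, 2√(L_{M_Γ})} and L := L_Ω + L_Γ. -/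
open Matrix Finset

/-- The squared "energy" norm `‖x‖_S² = xᵀ S x` induced by a matrix `S`. -/
noncomputable def vecNormSq {ι : Type*} [Fintype ι] (S : Matrix ι ι ℝ) (x : ι → ℝ) : ℝ :=
  x ⬝ᵥ S.mulVec x

/-- The constant `η` from Lemma A.1/A.2: `η := √(2 L_M)` if `L_A < √(2 L_M)`, and
`η := L_A + √(L_A² − 2 L_M)` otherwise. -/
noncomputable def etaConst (LA LM : ℝ) : ℝ :=
  if LA < Real.sqrt (2 * LM) then Real.sqrt (2 * LM) else LA + Real.sqrt (LA ^ 2 - 2 * LM)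

/-!
The errors of the increments satisfy the equations of the scheme with the increments of the sources
on the right; one tests these equations with the errors of the inner and of the boundary increment.
The identities for `‖x - y‖²` produce the energies on both sides, and the boundary mass and inverse
estimates bound the error of the boundary increment in the bulk norms. The source of the boundary
equation is absorbed by Young's inequality, but in the bulk this loses too much if `τ * LA` is
small: for `τ * LA ≤ 1 / 4` a multiple `b` of the tested inner equation is subtracted first.
-/

namespace LieSplitting

section PosSemidefForms

variable {V : Type*} [AddCommGroup V] [Module ℝ V] {B : LinearMap.BilinForm ℝ V}

lemma two_mul_apply_le (hB : B.IsPosSemidef) {α β γ : ℝ} (hα : 0 ≤ α) (hγ : 0 ≤ γ)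
    (hβ : β ^ 2 ≤ α * γ) (x y : V) : 2 * β * B x y ≤ α * B x x + γ * B y y := by
  have hx := hB.isNonneg.nonneg x
  have hy := hB.isNonneg.nonneg y
  have hxy := LinearMap.BilinForm.apply_sq_le_of_symm B hB.isNonneg.nonneg
    (LinearMap.BilinForm.isSymm_iff.1 hB.isSymm) x y
  refine le_of_abs_le (abs_le_of_sq_le_sq ?_ (by positivity))
  calc (2 * β * B x y) ^ 2 = 4 * (β ^ 2 * B x y ^ 2) := by ring
    _ ≤ 4 * ((α * γ) * (B x x * B y y)) := by gcongr
    _ ≤ (α * B x x + γ * B y y) ^ 2 := by nlinarith [sq_nonneg (α * B x x - γ * B y y)]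

lemma apply_add_self (hB : B.IsSymm) (x y : V) :
    B (x + y) (x + y) = B x x + 2 * B x y + B y y := by
  have hxy : B y x = B x y := hB.eq y x
  simp only [map_add, LinearMap.add_apply, hxy]
  ring

lemma apply_sub_self (hB : B.IsSymm) (x y : V) :
    B (x - y) (x - y) = B x x - 2 * B x y + B y y := by
  have hxy : B y x = B x y := hB.eq y x
  simp only [map_sub, LinearMap.sub_apply, hxy]
  ring

lemma div_one_add_mul_apply_add_self_le (hB : B.IsPosSemidef) {c : ℝ} (hc : 0 ≤ c) (x y : V) :
    c / (1 + c) * B (x + y) (x + y) ≤ c * B x x + B y y := by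
  have hxy := two_mul_apply_le hB (mul_nonneg hc hc) zero_le_one (β := c) (by ring_nf; rfl) x y
  rw [div_mul_eq_mul_div, div_le_iff₀ (by positivity), apply_add_self hB.isSymm]
  linarith

lemma apply_self_le_two_mul_apply_add_add_self (hB : B.IsPosSemidef) (x y z : V) :
    B x x ≤ 2 * B (x + y + z) (x + y + z) + 4 * B y y + 4 * B z z := by
  have hxyz := hB.isNonneg.nonneg (x + (2 : ℝ) • (y + z))
  have hyz := hB.isNonneg.nonneg (y - z)
  rw [apply_sub_self hB.isSymm] at hyz
  simp only [apply_add_self hB.isSymm, map_smul, LinearMap.smul_apply, smul_eq_mul] at hxyz ⊢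
  simp only [map_add, LinearMap.add_apply] at hxyz ⊢
  linarith

lemma stiffness_le_of_weights (hB : B.IsPosSemidef) {l σ b : ℝ} (hl : 0 ≤ l)
    (hα : 0 ≤ 4 * l / (1 + 4 * l) - σ * l - b ^ 2)
    (hdisc : (8 * l / (1 + 4 * l) - b) ^ 2 ≤
      (4 * l / (1 + 4 * l) - σ * l - b ^ 2) * (8 * l + 16 * l / (1 + 4 * l)))
    (T E G Q : V) :
    σ * l * B T T + 2 * b * B E T ≤ 4 * l * B (T + G + Q) (T + G + Q) + B (E - Q) (E - Q)
      + B (G - Q) (G - Q) + 8 * l * B Q Q := by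
  have hET := two_mul_apply_le hB zero_le_one (sq_nonneg b) (one_mul (b ^ 2)).ge (E - Q) T
  -- Writing `T + 2Q = (T + G + Q) + (Q - G)` eliminates `G` from the remaining estimate.
  have hX := div_one_add_mul_apply_add_self_le hB (by positivity : 0 ≤ 4 * l)
    (T + G + Q) (Q - G)
  have hTQ := two_mul_apply_le hB (β := -(8 * l / (1 + 4 * l) - b)) hα
    (by positivity : 0 ≤ 8 * l + 16 * l / (1 + 4 * l)) (by rwa [neg_sq]) T Q
  have hsum : T + G + Q + (Q - G) = T + (2 : ℝ) • Q := by rw [two_smul]; abel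
  have hQT : B Q T = B T Q := hB.isSymm.eq Q T
  have hQG : B Q G = B G Q := hB.isSymm.eq Q G
  rw [hsum, apply_sub_self hB.isSymm, apply_add_self hB.isSymm T] at hX
  rw [apply_sub_self hB.isSymm G]
  simp only [map_sub, map_smul, LinearMap.sub_apply, LinearMap.smul_apply, smul_eq_mul,
    hQT, hQG] at hET hX ⊢
  linear_combination hET + hX + hTQ

end PosSemidefForms

section BulkSource

variable {V : Type*} [AddCommGroup V] [Module ℝ V] {a m : LinearMap.BilinForm ℝ V}
  {l η Λ σ b ρ : ℝ}

/-- Conditions on the weights under which the bulk source term is absorbed: `σ` is the Young weight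
of the source itself, `b` the multiple of the tested inner equation that is subtracted, and `ρ` the
Young weight of the `η`-term. -/
structure AdmissibleWeights (m : LinearMap.BilinForm ℝ V) (l η Λ σ b ρ : ℝ) : Prop where
  pos : 0 < σ
  le_two : σ ≤ 2
  nonneg : 0 ≤ ρ
  stiffness_nonneg : 0 ≤ 4 * l / (1 + 4 * l) - σ * l - b ^ 2
  stiffness_discrim : (8 * l / (1 + 4 * l) - b) ^ 2 ≤
    (4 * l / (1 + 4 * l) - σ * l - b ^ 2) * (8 * l + 16 * l / (1 + 4 * l))
  shift_discrim : η ^ 2 ≤ ρ * (2 * η ^ 2 + (4 - 2 * σ) * Λ)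
  mass_le (E G : V) :
    σ⁻¹ * m (E + G - b • E) (E + G - b • E) + ρ * m (E + G) (E + G) ≤
      (1 - 2 * b) * m E E + (1 + η) * m (E + G) (E + G) + (8 - 4 * σ) * Λ * m G G

lemma AdmissibleWeights.source_le (hw : AdmissibleWeights m l η Λ σ b ρ) (ha : a.IsPosSemidef)
    (hm : m.IsPosSemidef) (hl : 0 ≤ l) (hΛ : 0 ≤ Λ) {L : ℝ} (hL : 0 ≤ L) {T E G Q φ : V}
    (hφ : m φ φ ≤ L + l * a T T + Λ * m T T) (hE : m E φ = m E E + a E T) :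
    2 * m (E + G) φ + 2 * η * m (E + G) (T + G + Q) ≤
      4 * l * a (T + G + Q) (T + G + Q) + (2 * η ^ 2 + 4 * Λ) * m (T + G + Q) (T + G + Q)
        + a (E - Q) (E - Q) + a (G - Q) (G - Q) + 8 * l * a Q Q
        + m E E + (1 + η) * m (E + G) (E + G) + 8 * Λ * m G G + 8 * Λ * m Q Q + 2 * L := by
  have hσ := hw.pos
  have hσ₂ := hw.le_two
  have hgap : 0 ≤ 4 - 2 * σ := by linarith
  have hsource := two_mul_apply_le hm (inv_nonneg.2 hσ.le) hσ.le (β := 1)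
    (by rw [inv_mul_cancel₀ hσ.ne', one_pow]) (E + G - b • E) φ
  have hshift := two_mul_apply_le hm hw.nonneg
    (by positivity : 0 ≤ 2 * η ^ 2 + (4 - 2 * σ) * Λ)
    hw.shift_discrim (E + G) (T + G + Q)
  have hstiff := stiffness_le_of_weights ha hl hw.stiffness_nonneg hw.stiffness_discrim T E G Q
  have hmass := hw.mass_le E G
  have hlip := mul_le_mul_of_nonneg_left hφ hσ.le
  have hT := mul_le_mul_of_nonneg_left (apply_self_le_two_mul_apply_add_add_self hm T G Q)
    (mul_nonneg hσ.le hΛ)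
  have hQ := mul_nonneg (mul_nonneg (sub_nonneg.2 hσ₂) hΛ) (hm.isNonneg.nonneg Q)
  have hσL := mul_le_mul_of_nonneg_right hσ₂ hL
  have hsplit : m (E + G - b • E) φ = m (E + G) φ - b * m E φ := by
    simp only [map_sub, map_smul, LinearMap.sub_apply, LinearMap.smul_apply, smul_eq_mul]
  rw [hsplit] at hsource
  linear_combination hsource + hshift + hstiff + hmass + hlip + hT + 4 * hQ + hσL + 2 * b * hE

lemma stiffness_discrim_of_le_quarter (hl : 0 ≤ l) (hl₄ : l ≤ 1 / 4) :
    (8 * l / (1 + 4 * l) - 2 * l / (1 + 6 * l)) ^ 2 ≤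
      (4 * l / (1 + 4 * l) - 6 / (3 + 8 * l) * l - (2 * l / (1 + 6 * l)) ^ 2)
        * (8 * l + 16 * l / (1 + 4 * l)) := by
  have hdiff : (4 * l / (1 + 4 * l) - 6 / (3 + 8 * l) * l - (2 * l / (1 + 6 * l)) ^ 2)
        * (8 * l + 16 * l / (1 + 4 * l)) - (8 * l / (1 + 4 * l) - 2 * l / (1 + 6 * l)) ^ 2 =
      4 * l ^ 2 * (1 - 4 * l) * (9 + 60 * l + 16 * l ^ 2 - 320 * l ^ 3)
        / ((1 + 4 * l) ^ 2 * (3 + 8 * l) * (1 + 6 * l) ^ 2) := by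
    field_simp
    ring
  have hfactor : 0 ≤ 1 - 4 * l := by linarith
  have hcubic : 0 ≤ 9 + 60 * l + 16 * l ^ 2 - 320 * l ^ 3 := by nlinarith [sq_nonneg l]
  rw [← sub_nonneg, hdiff]
  positivity

lemma shift_discrim_of_le_quarter (hl : 0 ≤ l) (hl₄ : l ≤ 1 / 4) (hΛ : 0 ≤ Λ) (hlη : l ≤ η)
    (hη : 2 * l * η ≤ η ^ 2 + 2 * Λ) :
    η ^ 2 ≤ (1 / 2 + η - 23 * l / 15) * (2 * η ^ 2 + 32 / 5 * l * Λ) := by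
  have hη₀ : 0 ≤ η := hl.trans hlη
  have hρ : 11 / 30 ≤ 1 / 2 + η - 23 * l / 15 := by linarith
  have hlΛ := mul_le_mul_of_nonneg_right hρ (mul_nonneg hl hΛ)
  suffices 0 ≤ 150 * (η ^ 2 * (η - 23 / 15 * l)) + 176 * (l * Λ) by linarith
  have hquad : 0 ≤ 150 * η ^ 2 - 318 * (η * l) + 176 * l ^ 2 := by
    nlinarith [sq_nonneg (150 * η - 159 * l), sq_nonneg l]
  linear_combination η * hquad + 88 * l * hη

lemma mass_discrim_of_le_quarter (hl : 0 ≤ l) (hl₄ : l ≤ 1 / 4) :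
    (-((3 + 8 * l) / 6 * (2 * l / (1 + 6 * l)))) ^ 2 ≤
      l / 5 * (1 - 2 * (2 * l / (1 + 6 * l)) - (3 + 8 * l) / 6 * (2 * l / (1 + 6 * l)) ^ 2) := by
  have hdiff : l / 5 * (1 - 2 * (2 * l / (1 + 6 * l)) - (3 + 8 * l) / 6 * (2 * l / (1 + 6 * l)) ^ 2)
        - (-((3 + 8 * l) / 6 * (2 * l / (1 + 6 * l)))) ^ 2 =
      l * (9 + 27 * l - 150 * l ^ 2 - 368 * l ^ 3) / (45 * (1 + 6 * l) ^ 2) := by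
    field_simp
    ring
  have hcubic : 0 ≤ 9 + 27 * l - 150 * l ^ 2 - 368 * l ^ 3 := by
    nlinarith [sq_nonneg l, mul_nonneg hl (sub_nonneg.2 hl₄)]
  rw [← sub_nonneg, hdiff]
  positivity

lemma mass_le_of_le_quarter (hm : m.IsPosSemidef) (hl : 0 ≤ l) (hl₄ : l ≤ 1 / 4) (η : ℝ)
    (E G : V) :
    (3 + 8 * l) / 6 * m (E + G - (2 * l / (1 + 6 * l)) • E) (E + G - (2 * l / (1 + 6 * l)) • E)
        + (1 / 2 + η - 23 * l / 15) * m (E + G) (E + G) ≤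
      (1 - 2 * (2 * l / (1 + 6 * l))) * m E E + (1 + η) * m (E + G) (E + G) := by
  have hγ : 0 ≤ 1 - 2 * (2 * l / (1 + 6 * l)) - (3 + 8 * l) / 6 * (2 * l / (1 + 6 * l)) ^ 2 := by
    have : 1 - 2 * (2 * l / (1 + 6 * l)) - (3 + 8 * l) / 6 * (2 * l / (1 + 6 * l)) ^ 2 =
        (3 + 24 * l + 14 * l ^ 2 + 16 * l ^ 2 * (1 - l)) / (3 * (1 + 6 * l) ^ 2) := by
      field_simp
      ring
    have hl₁ : 0 ≤ 1 - l := by linarith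
    rw [this]
    positivity
  have hyoung := two_mul_apply_le hm (by positivity) hγ (mass_discrim_of_le_quarter hl hl₄)
    (E + G) E
  rw [apply_sub_self hm.isSymm]
  simp only [map_smul, LinearMap.smul_apply, smul_eq_mul]
  linear_combination hyoung

/- At `b = 0` the stiffness condition forces `σ ≤ 4 / (3 + 4 * l)`, and for small `l` the resulting
`ρ ≈ 1 / 4 + η` is too small for `shift_discrim`; taking `b > 0` allows `σ` near `2`. The weight `ρ`
is `1 + η - σ⁻¹ - l / 5`, where `l / 5` is spent on the cross term of `mass_le`. -/
lemma admissibleWeights_of_le_quarter (hm : m.IsPosSemidef) (hl : 0 ≤ l) (hl₄ : l ≤ 1 / 4)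
    (hΛ : 0 ≤ Λ) (hlη : l ≤ η) (hη : 2 * l * η ≤ η ^ 2 + 2 * Λ) :
    AdmissibleWeights m l η Λ (6 / (3 + 8 * l)) (2 * l / (1 + 6 * l))
      (1 / 2 + η - 23 * l / 15) where
  pos := by positivity
  le_two := by rw [div_le_iff₀ (by positivity)]; linarith
  nonneg := by linarith
  stiffness_nonneg := by
    have : 4 * l / (1 + 4 * l) - 6 / (3 + 8 * l) * l - (2 * l / (1 + 6 * l)) ^ 2 =
        2 * l * (3 + 34 * l + 116 * l ^ 2 + 80 * l ^ 3)
          / ((1 + 4 * l) * (3 + 8 * l) * (1 + 6 * l) ^ 2) := by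
      field_simp
      ring
    rw [this]
    positivity
  stiffness_discrim := stiffness_discrim_of_le_quarter hl hl₄
  shift_discrim := by
    have hσ : 32 / 5 * l ≤ 4 - 2 * (6 / (3 + 8 * l)) := by
      rw [← sub_nonneg]
      have : 4 - 2 * (6 / (3 + 8 * l)) - 32 / 5 * l = 64 * l * (1 - 4 * l) / (5 * (3 + 8 * l)) := by
        field_simp
        ring
      rw [this]
      have : 0 ≤ 1 - 4 * l := by linarith
      positivity
    refine (shift_discrim_of_le_quarter hl hl₄ hΛ hlη hη).trans ?_
    have : 0 ≤ 1 / 2 + η - 23 * l / 15 := by linarith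
    gcongr
  mass_le E G := by
    have hσ : 0 ≤ 8 - 4 * (6 / (3 + 8 * l)) := by
      rw [sub_nonneg, ← le_div_iff₀' (by norm_num), div_le_iff₀ (by positivity)]
      linarith
    have hG := mul_nonneg (mul_nonneg hσ hΛ) (hm.isNonneg.nonneg G)
    rw [inv_div]
    linarith [mass_le_of_le_quarter hm hl hl₄ η E G]

lemma shift_discrim_of_quarter_le (hl₄ : 1 / 4 ≤ l) (hΛ : 0 ≤ Λ) (hlη : l ≤ η)
    (hΛη : 2 * Λ ≤ η ^ 2) (hη : 2 * l * η ≤ η ^ 2 + 2 * Λ) :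
    η ^ 2 ≤ (1 / 4 + η - l + 4 * Λ / (1 + 4 * Λ)) * (2 * η ^ 2 + 2 * Λ) := by
  have hη₀ : 0 < η := by linarith
  have hr : 0 ≤ 2 * η ^ 2 + 4 * Λ - η := by linear_combination 2 * hη + 4 * η * hl₄
  have hbracket : 0 ≤ 2 * η ^ 3 + 7 * η ^ 2 + 8 * Λ - 2 * η - 4 * Λ * η := by
    linear_combination 2 * η * hΛη + 2 * hr + 3 * sq_nonneg η
  have hcleared : 0 ≤ (1 + 4 * Λ) * (2 * (η ^ 2 + Λ) * (η / 4 + η ^ 2 / 2 - Λ) - η ^ 3)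
      + 8 * Λ * η * (η ^ 2 + Λ) := by
    have hΛηbracket := mul_nonneg (mul_nonneg hΛ hη₀.le) hbracket
    have hrΛη := mul_nonneg hr (sub_nonneg.2 hΛη)
    linear_combination hΛηbracket + (1 / 4 + Λ) * hrΛη + η ^ 2 / 4 * hr
  have hρ : 1 / 4 + η - l + 4 * Λ / (1 + 4 * Λ) =
      ((1 / 4 + η - l) * (1 + 4 * Λ) + 4 * Λ) / (1 + 4 * Λ) := by
    field_simp
  rw [hρ, div_mul_eq_mul_div, le_div_iff₀ (by positivity), ← mul_le_mul_iff_right₀ hη₀]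
  linear_combination hcleared + (1 + 4 * Λ) * (η ^ 2 + Λ) * hη

/- `σ` turns `stiffness_discrim` into an equality, and `ρ` is `1 + η - σ⁻¹` plus the gain
`4 * Λ / (1 + 4 * Λ)` from `m E E + 4 * Λ * m G G`. -/
lemma admissibleWeights_of_quarter_le (hm : m.IsPosSemidef) (hl₄ : 1 / 4 ≤ l)
    (hΛ : 0 ≤ Λ) (hlη : l ≤ η) (hΛη : 2 * Λ ≤ η ^ 2) (hη : 2 * l * η ≤ η ^ 2 + 2 * Λ) :
    AdmissibleWeights m l η Λ (4 / (3 + 4 * l)) 0 (1 / 4 + η - l + 4 * Λ / (1 + 4 * Λ)) := by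
  have hl : 0 ≤ l := by linarith
  have hσ : 4 / (3 + 4 * l) ≤ 1 := by rw [div_le_one (by positivity)]; linarith
  have hρ : 0 ≤ 1 / 4 + η - l + 4 * Λ / (1 + 4 * Λ) := by
    have : 0 ≤ η - l := sub_nonneg.2 hlη
    rw [add_sub_assoc]
    positivity
  have hα : 4 * l / (1 + 4 * l) - 4 / (3 + 4 * l) * l - 0 ^ 2 =
      8 * l / ((1 + 4 * l) * (3 + 4 * l)) := by
    field_simp
    ring
  refine ⟨by positivity, by linarith, hρ, ?_, ?_, ?_, fun E G => ?_⟩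
  · rw [hα]
    positivity
  · rw [hα]
    refine le_of_eq ?_
    field_simp
    ring
  · refine (shift_discrim_of_quarter_le hl₄ hΛ hlη hΛη hη).trans ?_
    gcongr
    linarith
  · have hEG := div_one_add_mul_apply_add_self_le hm (by positivity : 0 ≤ 4 * Λ) G E
    have hG := mul_nonneg (mul_nonneg (sub_nonneg.2 hσ) hΛ) (hm.isNonneg.nonneg G)
    rw [inv_div, zero_smul, sub_zero]
    rw [add_comm G E] at hEG
    linear_combination hEG + 4 * hG

lemma exists_admissibleWeights (hm : m.IsPosSemidef) (hl : 0 ≤ l) (hΛ : 0 ≤ Λ) (hlη : l ≤ η)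
    (hΛη : 2 * Λ ≤ η ^ 2) (hη : 2 * l * η ≤ η ^ 2 + 2 * Λ) :
    ∃ σ b ρ, AdmissibleWeights m l η Λ σ b ρ := by
  rcases le_total l (1 / 4) with hl₄ | hl₄
  · exact ⟨_, _, _, admissibleWeights_of_le_quarter hm hl hl₄ hΛ hlη hη⟩
  · exact ⟨_, _, _, admissibleWeights_of_quarter_le hm hl₄ hΛ hlη hΛη hη⟩

lemma bulk_error_le (ha : a.IsPosSemidef) (hm : m.IsPosSemidef) (hl : 0 ≤ l) (hΛ : 0 ≤ Λ)
    (hlη : l ≤ η) (hΛη : 2 * Λ ≤ η ^ 2) (hη : 2 * l * η ≤ η ^ 2 + 2 * Λ) {C L : ℝ} (hL : 0 ≤ L)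
    (hlC : 2 * l ≤ C) (hηC : 2 * Λ + η ^ 2 ≤ C * η) {T E G Q φ : V}
    (hφ : m φ φ ≤ L + l * a T T + Λ * m T T) (hE : m E φ = m E E + a E T) :
    (1 - 2 * C) * (a (T + G + Q) (T + G + Q) + η * m (T + G + Q) (T + G + Q))
        + 2 * (m G φ - m G E - a G T) ≤
      a (T + Q - E) (T + Q - E) + η * m (T + Q - E) (T + Q - E)
        + 2 * a G G + (1 + 8 * Λ) * m G G + 2 * a Q Q + 4 * C * (a Q Q + η * m Q Q) + 2 * L := by
  obtain ⟨σ, b, ρ, hw⟩ := exists_admissibleWeights hm hl hΛ hlη hΛη hη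
  have hsource := hw.source_le ha hm hl hΛ hL (G := G) (Q := Q) hφ hE
  have hmass : m (T + Q - E) (T + Q - E) = m (T + G + Q) (T + G + Q)
      - 2 * m (E + G) (T + G + Q) + m (E + G) (E + G) := by
    rw [show T + Q - E = T + G + Q - (E + G) by abel, apply_sub_self hm.isSymm,
      hm.isSymm.eq (T + G + Q) (E + G)]
  have hstiff : a (T + G + Q) (T + G + Q) + a (E - Q) (E - Q) + a (G - Q) (G - Q)
      - 2 * a (E + G) T = a (T + Q - E) (T + Q - E) + 2 * a G G + 2 * a Q Q := by
    simp only [apply_sub_self ha.isSymm, apply_add_self ha.isSymm]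
    have hTE : a T E = a E T := ha.isSymm.eq T E
    have hTG : a T G = a G T := ha.isSymm.eq T G
    have hQE : a Q E = a E Q := ha.isSymm.eq Q E
    simp only [map_add, LinearMap.add_apply, hTE, hTG, hQE]
    ring
  have hEG := apply_add_self hm.isSymm E G
  have hGE : m G E = m E G := hm.isSymm.eq G E
  have hmφ : m (E + G) φ = m E φ + m G φ := by rw [map_add, LinearMap.add_apply]
  have haT : a (E + G) T = a E T + a G T := by rw [map_add, LinearMap.add_apply]
  have haX := mul_le_mul_of_nonneg_right hlC (ha.isNonneg.nonneg (T + G + Q))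
  have hmX := mul_le_mul_of_nonneg_right hηC (hm.isNonneg.nonneg (T + G + Q))
  have haQ := mul_le_mul_of_nonneg_right hlC (ha.isNonneg.nonneg Q)
  have hmQ := mul_le_mul_of_nonneg_right hηC (hm.isNonneg.nonneg Q)
  have hηQ := mul_nonneg (sq_nonneg η) (hm.isNonneg.nonneg Q)
  linear_combination hsource - η * hmass + hstiff + hEG + 2 * haX + 2 * hmX + 4 * haQ + 4 * hmQ
    + 4 * hηQ - 2 * hmφ + 2 * haT - 2 * hE - 2 * hGE

end BulkSource

lemma boundary_error_le {W : Type*} [AddCommGroup W] [Module ℝ W] {a m : LinearMap.BilinForm ℝ W}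
    (ha : a.IsPosSemidef) (hm : m.IsPosSemidef) {l η Λ C L : ℝ} (hη : 0 ≤ η) (hlC : l ≤ C)
    (hηC : Λ + η ^ 2 ≤ C * η) {p q ψ : W}
    (hψ : m ψ ψ ≤ L + l * a p p + Λ * m p p) :
    (1 - 2 * C) * (a p p + η * m p p) + m (p - q) (p - q) ≤
      a q q + η * m q q + 2 * m (p - q) (p - q) + 2 * a (p - q) p - 2 * m (p - q) ψ + 2 * L := by
  have hsource := two_mul_apply_le hm (α := 1 / 2) (β := 1) (γ := 2) (by norm_num) (by norm_num)
    (by norm_num) (p - q) ψ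
  have hshift := two_mul_apply_le hm (α := 1 / 2) (β := η) (γ := 2 * η ^ 2) (by norm_num)
    (by positivity) (by linarith) (p - q) p
  have hag := ha.isNonneg.nonneg (p - q)
  have hmg := mul_nonneg hη (hm.isNonneg.nonneg (p - q))
  have hap := mul_le_mul_of_nonneg_right hlC (ha.isNonneg.nonneg p)
  have hmp := mul_le_mul_of_nonneg_right hηC (hm.isNonneg.nonneg p)
  have haq : a q q = a p p - 2 * a (p - q) p + a (p - q) (p - q) := by
    rw [ha.isSymm.eq (p - q) p, ← apply_sub_self ha.isSymm, sub_sub_cancel]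
  have hmq : m q q = m p p - 2 * m (p - q) p + m (p - q) (p - q) := by
    rw [hm.isSymm.eq (p - q) p, ← apply_sub_self hm.isSymm, sub_sub_cancel]
  linear_combination hsource + hshift + hag + hmg + 2 * hap + 2 * hmp + 2 * hψ - haq - η * hmq

section EtaConst

variable {LA LM C τ : ℝ}

lemma le_etaConst : LA ≤ etaConst LA LM := by
  unfold etaConst
  split_ifs with h
  · exact h.le
  · exact le_add_of_nonneg_right (Real.sqrt_nonneg _)

lemma etaConst_nonneg (hLA : 0 ≤ LA) : 0 ≤ etaConst LA LM := hLA.trans le_etaConst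

lemma etaConst_sq_of_lt_sqrt (hLM : 0 ≤ LM) (h : LA < √(2 * LM)) :
    etaConst LA LM ^ 2 = 2 * LM := by
  rw [etaConst, if_pos h, Real.sq_sqrt (by positivity)]

lemma etaConst_sq_of_sqrt_le (hLA : 0 ≤ LA) (h : √(2 * LM) ≤ LA) :
    etaConst LA LM ^ 2 = 2 * LA * etaConst LA LM - 2 * LM := by
  have hsq : √(LA ^ 2 - 2 * LM) ^ 2 = LA ^ 2 - 2 * LM :=
    Real.sq_sqrt (sub_nonneg.2 ((Real.sqrt_le_left hLA).1 h))
  rw [etaConst, if_neg h.not_gt]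
  linear_combination hsq

lemma two_mul_le_etaConst_sq (hLA : 0 ≤ LA) (hLM : 0 ≤ LM) : 2 * LM ≤ etaConst LA LM ^ 2 := by
  rcases lt_or_ge LA (√(2 * LM)) with h | h
  · exact (etaConst_sq_of_lt_sqrt hLM h).ge
  · calc 2 * LM ≤ LA ^ 2 := (Real.sqrt_le_left hLA).1 h
      _ ≤ etaConst LA LM ^ 2 := by gcongr; exact le_etaConst

lemma two_mul_mul_etaConst_le (hLA : 0 ≤ LA) (hLM : 0 ≤ LM) :
    2 * LA * etaConst LA LM ≤ etaConst LA LM ^ 2 + 2 * LM := by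
  rcases lt_or_ge LA (√(2 * LM)) with h | h
  · have := mul_le_mul_of_nonneg_right (le_etaConst (LA := LA) (LM := LM))
      (etaConst_nonneg (LM := LM) hLA)
    linarith [etaConst_sq_of_lt_sqrt hLM h]
  · linarith [etaConst_sq_of_sqrt_le hLA h]

lemma two_mul_add_etaConst_sq_le (hLA : 0 ≤ LA) (hLM : 0 ≤ LM) (hLAC : 2 * LA ≤ C)
    (hLMC : 8 * LM ≤ C ^ 2) : 2 * LM + etaConst LA LM ^ 2 ≤ C * etaConst LA LM := by
  have hη := etaConst_nonneg (LM := LM) hLA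
  rcases lt_or_ge LA (√(2 * LM)) with h | h
  · have hsq := etaConst_sq_of_lt_sqrt hLM h
    have hC : 2 * etaConst LA LM ≤ C := by
      refine le_of_sq_le_sq ?_ (by linarith)
      linarith
    linarith [mul_le_mul_of_nonneg_right hC hη]
  · linarith [etaConst_sq_of_sqrt_le hLA h, mul_le_mul_of_nonneg_right hLAC hη]

lemma etaConst_mul_sq_mul (hτ : 0 < τ) :
    etaConst (τ * LA) (τ ^ 2 * LM) = τ * etaConst LA LM := by
  have hsqrt (x : ℝ) : √(τ ^ 2 * x) = τ * Real.sqrt x := by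
    rw [Real.sqrt_mul (sq_nonneg τ), Real.sqrt_sq hτ.le]
  have hmul : 2 * (τ ^ 2 * LM) = τ ^ 2 * (2 * LM) := by ring
  have hsub : (τ * LA) ^ 2 - τ ^ 2 * (2 * LM) = τ ^ 2 * (LA ^ 2 - 2 * LM) := by ring
  simp only [etaConst, hmul, hsub, hsqrt, mul_lt_mul_iff_right₀ hτ, mul_ite, mul_add]

end EtaConst

section OneStep

variable {V W : Type*} [AddCommGroup V] [Module ℝ V] [AddCommGroup W] [Module ℝ W]

/- `T` and `E` are the inner increment and its error, `G` the error `p - q` of the boundary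
increment and `Q` the initial boundary increment `q`, all extended by zero; `φ` and `ψ` represent
the source increments. So `T + G + Q` and `T + Q - E` are the computed and the exact increment. -/
theorem one_step_error_le {a m : LinearMap.BilinForm ℝ V} {aΓ mΓ : LinearMap.BilinForm ℝ W}
    (ha : a.IsPosSemidef) (hm : m.IsPosSemidef) (haΓ : aΓ.IsPosSemidef) (hmΓ : mΓ.IsPosSemidef)
    {L LA LM LΓ LAΓ LMΓ C μ β : ℝ} (hL : 0 ≤ L) (hLA : 0 ≤ LA) (hLM : 0 ≤ LM) (hLAΓ : 0 ≤ LAΓ)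
    (hLMΓ : 0 ≤ LMΓ) (hLAC : 2 * LA ≤ C) (hLMC : 8 * LM ≤ C ^ 2) (hLAΓC : LAΓ ≤ C)
    (hLMΓC : 4 * LMΓ ≤ C ^ 2) {T E G Q φ : V} {p q ψ : W}
    (hφ : m φ φ ≤ L + LA * a T T + LM * m T T)
    (hψ : mΓ ψ ψ ≤ LΓ + LAΓ * aΓ p p + LMΓ * mΓ p p)
    (hE : m E φ = m E E + a E T)
    (hG : m G φ = m G E + a G T + mΓ (p - q) (p - q) + aΓ (p - q) p - mΓ (p - q) ψ)
    (hmG : m G G ≤ μ * mΓ (p - q) (p - q)) (haG : a G G ≤ β * mΓ (p - q) (p - q)) :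
    (1 - 2 * C) * (a (T + G + Q) (T + G + Q) + etaConst LA LM * m (T + G + Q) (T + G + Q))
        + (1 - 2 * C) * (aΓ p p + etaConst (LAΓ / 2) (LMΓ / 2) * mΓ p p)
        + (1 - μ * (1 + 8 * LM) - β * 2) * mΓ (p - q) (p - q) ≤
      a (T + Q - E) (T + Q - E) + etaConst LA LM * m (T + Q - E) (T + Q - E)
        + (aΓ q q + etaConst (LAΓ / 2) (LMΓ / 2) * mΓ q q)
        + 2 * a Q Q + 4 * C * (a Q Q + etaConst LA LM * m Q Q) + 2 * (L + LΓ) := by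
  have hbulk := bulk_error_le ha hm hLA hLM le_etaConst (two_mul_le_etaConst_sq hLA hLM)
    (two_mul_mul_etaConst_le hLA hLM) hL hLAC (two_mul_add_etaConst_sq_le hLA hLM hLAC hLMC)
    (G := G) (Q := Q) hφ hE
  have hLAΓ₂ : 0 ≤ LAΓ / 2 := by positivity
  have hηΓ := two_mul_add_etaConst_sq_le hLAΓ₂ (by positivity : 0 ≤ LMΓ / 2)
    (C := C) (by linarith) (by linarith)
  have hbdry := boundary_error_le haΓ hmΓ (etaConst_nonneg (LM := LMΓ / 2) hLAΓ₂) hLAΓC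
    (by linarith) (q := q) hψ
  have hmG' := mul_le_mul_of_nonneg_left hmG (by positivity : 0 ≤ 1 + 8 * LM)
  linear_combination hbulk + hbdry + 2 * haG + hmG' - 2 * hG

end OneStep

section Matrices

variable {ι κ : Type*} [Fintype ι] [Fintype κ]

lemma vecNormSq_add_smul (S S' : Matrix ι ι ℝ) (c : ℝ) (x : ι → ℝ) :
    vecNormSq (S + c • S') x = vecNormSq S x + c * vecNormSq S' x := by
  simp only [vecNormSq, add_mulVec, smul_mulVec, dotProduct_add, dotProduct_smul, smul_eq_mul]

lemma vecNormSq_smul (S : Matrix ι ι ℝ) (c : ℝ) (x : ι → ℝ) :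
    vecNormSq S (c • x) = c ^ 2 * vecNormSq S x := by
  simp only [vecNormSq, mulVec_smul, dotProduct_smul, smul_dotProduct, smul_eq_mul]
  ring

lemma vecNormSq_nonneg {S : Matrix ι ι ℝ} (hS : S.PosSemidef) (x : ι → ℝ) :
    0 ≤ vecNormSq S x := by
  simpa only [vecNormSq, star_trivial] using hS.dotProduct_mulVec_nonneg x

lemma vecNormSq_fromBlocks_inr (S₁₁ : Matrix ι ι ℝ) (S₁₂ : Matrix ι κ ℝ) (S₂₁ : Matrix κ ι ℝ)
    (S₂₂ : Matrix κ κ ℝ) (z : κ → ℝ) :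
    vecNormSq (fromBlocks S₁₁ S₁₂ S₂₁ S₂₂) (Sum.elim 0 z) = vecNormSq S₂₂ z := by
  simp [vecNormSq, fromBlocks_mulVec]

variable [DecidableEq ι] [DecidableEq κ]

lemma mulVec_inv_mulVec {S : Matrix ι ι ℝ} (hS : S.PosDef) (x : ι → ℝ) :
    S *ᵥ (S⁻¹ *ᵥ x) = x := by
  rw [mulVec_mulVec, mul_nonsing_inv S ((isUnit_iff_isUnit_det S).1 hS.isUnit), one_mulVec]

lemma toBilin'_apply_self (S : Matrix ι ι ℝ) (x : ι → ℝ) : toBilin' S x x = vecNormSq S x :=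
  toBilin'_apply' S x x

lemma isPosSemidef_toBilin' {S : Matrix ι ι ℝ} (hS : S.PosSemidef) :
    LinearMap.BilinForm.IsPosSemidef (toBilin' S) where
  nonneg x := by
    rw [toBilin'_apply_self]
    exact vecNormSq_nonneg hS x
  eq x y := by
    have hST : Sᵀ = S := by simpa using hS.isHermitian.eq
    rw [toBilin'_apply', toBilin'_apply', dotProduct_comm, ← vecMul_transpose, hST,
      dotProduct_mulVec]

lemma toBilin'_inv_mulVec_right {S : Matrix ι ι ℝ} (hS : S.PosDef) (x y : ι → ℝ) :
    toBilin' S x (S⁻¹ *ᵥ y) = x ⬝ᵥ y := by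
  rw [toBilin'_apply', mulVec_inv_mulVec hS]

lemma toBilin'_inv_mulVec_self {S : Matrix ι ι ℝ} (hS : S.PosDef) (x : ι → ℝ) :
    toBilin' S (S⁻¹ *ᵥ x) (S⁻¹ *ᵥ x) = vecNormSq S⁻¹ x := by
  rw [toBilin'_inv_mulVec_right hS, dotProduct_comm, vecNormSq]

lemma toBilin'_fromBlocks_inl_inl (S₁₁ : Matrix ι ι ℝ) (S₁₂ : Matrix ι κ ℝ) (S₂₁ : Matrix κ ι ℝ)
    (S₂₂ : Matrix κ κ ℝ) (x y : ι → ℝ) :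
    toBilin' (fromBlocks S₁₁ S₁₂ S₂₁ S₂₂) (Sum.elim x 0) (Sum.elim y 0) = x ⬝ᵥ S₁₁ *ᵥ y := by
  simp [toBilin'_apply', fromBlocks_mulVec]

lemma toBilin'_fromBlocks_inr_inl (S₁₁ : Matrix ι ι ℝ) (S₁₂ : Matrix ι κ ℝ) (S₂₁ : Matrix κ ι ℝ)
    (S₂₂ : Matrix κ κ ℝ) (z : κ → ℝ) (y : ι → ℝ) :
    toBilin' (fromBlocks S₁₁ S₁₂ S₂₁ S₂₂) (Sum.elim 0 z) (Sum.elim y 0) = z ⬝ᵥ S₂₁ *ᵥ y := by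
  simp [toBilin'_apply', fromBlocks_mulVec]

lemma toBilin'_elim_zero_right_inv_mulVec {S : Matrix (ι ⊕ κ) (ι ⊕ κ) ℝ} (hS : S.PosDef)
    (x : ι → ℝ) (F : ι ⊕ κ → ℝ) :
    toBilin' S (Sum.elim x 0) (S⁻¹ *ᵥ F) = x ⬝ᵥ (F ∘ Sum.inl) := by
  simp [toBilin'_inv_mulVec_right hS, dotProduct]

lemma toBilin'_elim_zero_left_inv_mulVec {S : Matrix (ι ⊕ κ) (ι ⊕ κ) ℝ} (hS : S.PosDef)
    (z : κ → ℝ) (F : ι ⊕ κ → ℝ) :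
    toBilin' S (Sum.elim 0 z) (S⁻¹ *ᵥ F) = z ⬝ᵥ (F ∘ Sum.inr) := by
  simp [toBilin'_inv_mulVec_right hS, dotProduct]

section Scheme

variable {M₁₁ A₁₁ : Matrix ι ι ℝ} {M₁₂ A₁₂ : Matrix ι κ ℝ} {M₂₁ A₂₁ : Matrix κ ι ℝ}
  {M₂₂ A₂₂ MΓ AΓ : Matrix κ κ ℝ} {τ : ℝ} {d x : ι → ℝ} {p q z : κ → ℝ} {F : ι ⊕ κ → ℝ} {H : κ → ℝ}

lemma inner_equation_tested (hM : (fromBlocks M₁₁ M₁₂ M₂₁ M₂₂).PosDef)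
    (hinner : M₁₁ *ᵥ x + τ • A₁₁ *ᵥ d = F ∘ Sum.inl) :
    toBilin' (fromBlocks M₁₁ M₁₂ M₂₁ M₂₂) (Sum.elim x 0) ((fromBlocks M₁₁ M₁₂ M₂₁ M₂₂)⁻¹ *ᵥ F) =
      toBilin' (fromBlocks M₁₁ M₁₂ M₂₁ M₂₂) (Sum.elim x 0) (Sum.elim x 0)
        + (τ • toBilin' (fromBlocks A₁₁ A₁₂ A₂₁ A₂₂)) (Sum.elim x 0) (Sum.elim d 0) := by
  rw [toBilin'_elim_zero_right_inv_mulVec hM, ← hinner]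
  simp only [LinearMap.smul_apply, toBilin'_fromBlocks_inl_inl, dotProduct_add, dotProduct_smul]

lemma boundary_equation_tested (hM : (fromBlocks M₁₁ M₁₂ M₂₁ M₂₂).PosDef) (hMΓ : MΓ.PosDef)
    (hbdry : MΓ *ᵥ z + τ • AΓ *ᵥ p + M₂₁ *ᵥ x + τ • A₂₁ *ᵥ d = F ∘ Sum.inr + H) :
    toBilin' (fromBlocks M₁₁ M₁₂ M₂₁ M₂₂) (Sum.elim 0 z) ((fromBlocks M₁₁ M₁₂ M₂₁ M₂₂)⁻¹ *ᵥ F) =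
      toBilin' (fromBlocks M₁₁ M₁₂ M₂₁ M₂₂) (Sum.elim 0 z) (Sum.elim x 0)
        + (τ • toBilin' (fromBlocks A₁₁ A₁₂ A₂₁ A₂₂)) (Sum.elim 0 z) (Sum.elim d 0)
        + toBilin' MΓ z z + (τ • toBilin' AΓ) z p - toBilin' MΓ z (MΓ⁻¹ *ᵥ H) := by
  rw [toBilin'_elim_zero_left_inv_mulVec hM, eq_sub_of_add_eq hbdry.symm,
    toBilin'_inv_mulVec_right hMΓ]
  simp only [LinearMap.smul_apply, toBilin'_fromBlocks_inr_inl, dotProduct_add, dotProduct_sub,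
    dotProduct_smul]
  simp only [toBilin'_apply']
  ring

end Scheme

theorem increment_error_le {M₁₁ A₁₁ : Matrix ι ι ℝ} {M₁₂ A₁₂ : Matrix ι κ ℝ}
    {M₂₁ A₂₁ : Matrix κ ι ℝ} {M₂₂ A₂₂ MΓ AΓ : Matrix κ κ ℝ}
    (hM : (fromBlocks M₁₁ M₁₂ M₂₁ M₂₂).PosDef) (hA : (fromBlocks A₁₁ A₁₂ A₂₁ A₂₂).PosSemidef)
    (hMΓ : MΓ.PosDef) (hAΓ : AΓ.PosSemidef) {τ μ α : ℝ} (hτ : 0 < τ) (hα : 0 ≤ α)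
    (hmass : ∀ z, vecNormSq M₂₂ z ≤ μ * vecNormSq MΓ z)
    (hinv : ∀ z, vecNormSq A₂₂ z ≤ α * vecNormSq M₂₂ z)
    {LΩ LA LM LΓ LAΓ LMΓ C : ℝ} (hLΩ : 0 ≤ LΩ) (hLA : 0 ≤ LA) (hLM : 0 ≤ LM) (hLAΓ : 0 ≤ LAΓ)
    (hLMΓ : 0 ≤ LMΓ) (hLAC : 2 * LA ≤ C) (hLMC : 8 * LM ≤ C ^ 2) (hLAΓC : LAΓ ≤ C)
    (hLMΓC : 4 * LMΓ ≤ C ^ 2) {d e : ι → ℝ} {p q : κ → ℝ} {F : ι ⊕ κ → ℝ} {H : κ → ℝ}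
    (hF : vecNormSq (fromBlocks M₁₁ M₁₂ M₂₁ M₂₂)⁻¹ F ≤ LΩ * τ ^ 2
      + LA * (τ ^ 2 * vecNormSq (fromBlocks A₁₁ A₁₂ A₂₁ A₂₂) (Sum.elim d 0))
      + LM * (τ ^ 2 * vecNormSq (fromBlocks M₁₁ M₁₂ M₂₁ M₂₂) (Sum.elim d 0)))
    (hH : vecNormSq MΓ⁻¹ H ≤
      LΓ * τ ^ 2 + LAΓ * (τ ^ 2 * vecNormSq AΓ p) + LMΓ * (τ ^ 2 * vecNormSq MΓ p))
    (hinner : M₁₁ *ᵥ (d - e) + τ • A₁₁ *ᵥ d = F ∘ Sum.inl)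
    (hbdry : MΓ *ᵥ (p - q) + τ • AΓ *ᵥ p + M₂₁ *ᵥ (d - e) + τ • A₂₁ *ᵥ d = F ∘ Sum.inr + H) :
    τ * (1 - 2 * τ * C) * vecNormSq (fromBlocks A₁₁ A₁₂ A₂₁ A₂₂
          + etaConst LA LM • fromBlocks M₁₁ M₁₂ M₂₁ M₂₂) (Sum.elim d p)
        + τ * (1 - 2 * τ * C) * vecNormSq (AΓ + etaConst (LAΓ / 2) (LMΓ / 2) • MΓ) p
        + (1 - μ * (1 + 8 * τ ^ 2 * LM) - τ * α * μ * 2) * vecNormSq MΓ (p - q) ≤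
      τ * vecNormSq (fromBlocks A₁₁ A₁₂ A₂₁ A₂₂
          + etaConst LA LM • fromBlocks M₁₁ M₁₂ M₂₁ M₂₂) (Sum.elim e q)
        + τ * vecNormSq (AΓ + etaConst (LAΓ / 2) (LMΓ / 2) • MΓ) q
        + 2 * τ * vecNormSq A₂₂ q + 4 * τ ^ 2 * C * vecNormSq (A₂₂ + etaConst LA LM • M₂₂) q
        + 2 * τ ^ 2 * (LΩ + LΓ) := by
  have hstep := one_step_error_le ((isPosSemidef_toBilin' hA).smul hτ.le)
    (isPosSemidef_toBilin' hM.posSemidef) ((isPosSemidef_toBilin' hAΓ).smul hτ.le)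
    (isPosSemidef_toBilin' hMΓ.posSemidef) (L := τ ^ 2 * LΩ) (LA := τ * LA) (LM := τ ^ 2 * LM)
    (LΓ := τ ^ 2 * LΓ) (LAΓ := τ * LAΓ) (LMΓ := τ ^ 2 * LMΓ) (C := τ * C) (μ := μ)
    (β := τ * α * μ) (T := Sum.elim d 0) (E := Sum.elim (d - e) 0) (G := Sum.elim 0 (p - q))
    (Q := Sum.elim 0 q) (p := p) (q := q)
    (φ := (fromBlocks M₁₁ M₁₂ M₂₁ M₂₂)⁻¹ *ᵥ F) (ψ := MΓ⁻¹ *ᵥ H)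
    (by positivity) (by positivity) (by positivity) (by positivity) (by positivity)
    (by linear_combination τ * hLAC) (by linear_combination τ ^ 2 * hLMC) (by gcongr)
    (by linear_combination τ ^ 2 * hLMΓC) ?_ ?_ (inner_equation_tested hM hinner)
    (boundary_equation_tested hM hMΓ hbdry) ?_ ?_
  · rw [mul_div_assoc, mul_div_assoc, etaConst_mul_sq_mul hτ, etaConst_mul_sq_mul hτ] at hstep
    simp only [← Sum.elim_add_add, ← Sum.elim_sub_sub, add_zero, zero_add, sub_zero,
      sub_add_cancel, sub_sub_cancel, LinearMap.smul_apply, smul_eq_mul, toBilin'_apply_self,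
      vecNormSq_fromBlocks_inr, vecNormSq_add_smul] at hstep ⊢
    linear_combination hstep
  · simp only [LinearMap.smul_apply, smul_eq_mul, toBilin'_inv_mulVec_self hM, toBilin'_apply_self]
    linear_combination hF
  · simp only [LinearMap.smul_apply, smul_eq_mul, toBilin'_inv_mulVec_self hMΓ, toBilin'_apply_self]
    linear_combination hH
  · simpa only [toBilin'_apply_self, vecNormSq_fromBlocks_inr] using hmass (p - q)
  · simp only [LinearMap.smul_apply, smul_eq_mul, toBilin'_apply_self, vecNormSq_fromBlocks_inr]
    linear_combination τ * hinv (p - q) + τ * α * hmass (p - q)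

end Matrices

section FirstStep

lemma elim_add_smul_sub_elim {ι κ : Type*} (c : ℝ) (x d : ι → ℝ) (y p : κ → ℝ) :
    Sum.elim (x + c • d) (y + c • p) - Sum.elim x y = c • Sum.elim d p := by
  ext (i | j) <;> simp

variable {ι κ : Type*} [Fintype ι] [Fintype κ] {M₁₁ A₁₁ : Matrix ι ι ℝ} {M₁₂ A₁₂ : Matrix ι κ ℝ}
  {M₂₁ A₂₁ : Matrix κ ι ℝ} {M₂₂ A₂₂ MΓ AΓ : Matrix κ κ ℝ} {τ : ℝ} {x₀ d e : ι → ℝ}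
  {p₀ p q : κ → ℝ}

lemma inner_error_equation {f₀ f₁ : ι → ℝ}
    (hstep : M₁₁ *ᵥ d + A₁₁ *ᵥ (x₀ + τ • d) = f₁ - M₁₂ *ᵥ q - A₁₂ *ᵥ p₀)
    (hcons : M₁₁ *ᵥ e + M₁₂ *ᵥ q + A₁₁ *ᵥ x₀ + A₁₂ *ᵥ p₀ = f₀) :
    M₁₁ *ᵥ (d - e) + τ • A₁₁ *ᵥ d = f₁ - f₀ := by
  rw [mulVec_add, mulVec_smul] at hstep
  rw [mulVec_sub]
  linear_combination hstep - hcons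

lemma boundary_error_equation {f₀ f₁ g₀ g₁ : κ → ℝ}
    (hstep : MΓ *ᵥ p + AΓ *ᵥ (p₀ + τ • p) =
      g₁ + f₁ - M₂₂ *ᵥ q - A₂₂ *ᵥ p₀ - M₂₁ *ᵥ d - A₂₁ *ᵥ (x₀ + τ • d))
    (hcons : M₂₁ *ᵥ e + (M₂₂ + MΓ) *ᵥ q + A₂₁ *ᵥ x₀ + (A₂₂ + AΓ) *ᵥ p₀ = f₀ + g₀) :
    MΓ *ᵥ (p - q) + τ • AΓ *ᵥ p + M₂₁ *ᵥ (d - e) + τ • A₂₁ *ᵥ d = (f₁ - f₀) + (g₁ - g₀) := by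
  simp only [mulVec_add, mulVec_smul, add_mulVec] at hstep hcons
  simp only [mulVec_sub]
  linear_combination hstep - hcons

end FirstStep

end LieSplitting

open LieSplitting in
theorem lie_splitting_local_error_semilinear_general
    {ι κ : Type*} [Fintype ι] [Fintype κ] [DecidableEq ι] [DecidableEq κ]
    {M₁₁ A₁₁ : Matrix ι ι ℝ} {M₁₂ A₁₂ : Matrix ι κ ℝ} {M₂₁ A₂₁ : Matrix κ ι ℝ}
    {M₂₂ A₂₂ MΓ AΓ : Matrix κ κ ℝ}
    (hM : (fromBlocks M₁₁ M₁₂ M₂₁ M₂₂).PosDef) (hA : (fromBlocks A₁₁ A₁₂ A₂₁ A₂₂).PosSemidef)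
    (hMΓ : MΓ.PosDef) (hAΓ : AΓ.PosSemidef)
    {τ h cM cinv αΩ : ℝ} (hτ : 0 < τ) (hh : 0 < h) (hcinv : 0 ≤ cinv) (hαΩ : 0 ≤ αΩ)
    (hmass : ∀ z, vecNormSq M₂₂ z ≤ cM * h * vecNormSq MΓ z)
    (hinv : ∀ z, vecNormSq A₂₂ z ≤ (αΩ + cinv / h ^ 2) * vecNormSq M₂₂ z)
    {fΩ : ℝ → (ι ⊕ κ → ℝ) → (ι ⊕ κ → ℝ)} {fΓ : ℝ → (κ → ℝ) → (κ → ℝ)}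
    {LΩ LA LM LΓ LAΓ LMΓ C : ℝ} (hLΩ : 0 ≤ LΩ) (hLA : 0 ≤ LA) (hLM : 0 ≤ LM) (hLAΓ : 0 ≤ LAΓ)
    (hLMΓ : 0 ≤ LMΓ)
    (hLipΩ : ∀ (t t' : ℝ) (u u' : ι ⊕ κ → ℝ),
      vecNormSq (fromBlocks M₁₁ M₁₂ M₂₁ M₂₂)⁻¹ (fΩ t u - fΩ t' u') ≤
        LΩ * |t - t'| ^ 2 + LA * vecNormSq (fromBlocks A₁₁ A₁₂ A₂₁ A₂₂) (u - u')
          + LM * vecNormSq (fromBlocks M₁₁ M₁₂ M₂₁ M₂₂) (u - u'))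
    (hLipΓ : ∀ (t t' : ℝ) (q q' : κ → ℝ),
      vecNormSq MΓ⁻¹ (fΓ t q - fΓ t' q') ≤
        LΓ * |t - t'| ^ 2 + LAΓ * vecNormSq AΓ (q - q') + LMΓ * vecNormSq MΓ (q - q'))
    (hC : max (max (2 * LA) (√(8 * LM))) (max LAΓ (2 * √LMΓ)) ≤ C)
    {x₀ x₁ e : ι → ℝ} {p₀ p₁ q : κ → ℝ}
    (hscheme₁ : M₁₁ *ᵥ (τ⁻¹ • (x₁ - x₀)) + A₁₁ *ᵥ x₁ =
      fΩ τ (Sum.elim x₁ p₀) ∘ Sum.inl - M₁₂ *ᵥ q - A₁₂ *ᵥ p₀)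
    (hscheme₂ : MΓ *ᵥ (τ⁻¹ • (p₁ - p₀)) + AΓ *ᵥ p₁ =
      fΓ τ p₁ + fΩ τ (Sum.elim x₁ p₀) ∘ Sum.inr - M₂₂ *ᵥ q - A₂₂ *ᵥ p₀
        - M₂₁ *ᵥ (τ⁻¹ • (x₁ - x₀)) - A₂₁ *ᵥ x₁)
    (hcons₁ : M₁₁ *ᵥ e + M₁₂ *ᵥ q + A₁₁ *ᵥ x₀ + A₁₂ *ᵥ p₀ = fΩ 0 (Sum.elim x₀ p₀) ∘ Sum.inl)
    (hcons₂ : M₂₁ *ᵥ e + (M₂₂ + MΓ) *ᵥ q + A₂₁ *ᵥ x₀ + (A₂₂ + AΓ) *ᵥ p₀ =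
      fΩ 0 (Sum.elim x₀ p₀) ∘ Sum.inr + fΓ 0 p₀) :
    (1 - 2 * τ * C) * vecNormSq (fromBlocks A₁₁ A₁₂ A₂₁ A₂₂
          + etaConst LA LM • fromBlocks M₁₁ M₁₂ M₂₁ M₂₂) (Sum.elim x₁ p₁ - Sum.elim x₀ p₀)
        + (1 - 2 * τ * C) * vecNormSq (AΓ + etaConst (LAΓ / 2) (LMΓ / 2) • MΓ) (p₁ - p₀)
        + τ * (1 - cM * h * (1 + 8 * τ ^ 2 * LM) - (cM * αΩ * τ * h + cM * cinv * τ / h) * 2)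
          * vecNormSq MΓ (τ⁻¹ • (p₁ - p₀) - q) ≤
      τ ^ 2 * vecNormSq (fromBlocks A₁₁ A₁₂ A₂₁ A₂₂
          + etaConst LA LM • fromBlocks M₁₁ M₁₂ M₂₁ M₂₂) (Sum.elim e q)
        + τ ^ 2 * vecNormSq (AΓ + etaConst (LAΓ / 2) (LMΓ / 2) • MΓ) q
        + 2 * τ ^ 2 * vecNormSq A₂₂ q
        + 4 * τ ^ 3 * C * vecNormSq (A₂₂ + etaConst LA LM • M₂₂) q
        + 2 * τ ^ 3 * (LΩ + LΓ) := by
  obtain ⟨d, rfl⟩ : ∃ d, x₁ = x₀ + τ • d :=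
    ⟨τ⁻¹ • (x₁ - x₀), by rw [smul_inv_smul₀ hτ.ne', add_sub_cancel]⟩
  obtain ⟨p, rfl⟩ : ∃ p, p₁ = p₀ + τ • p :=
    ⟨τ⁻¹ • (p₁ - p₀), by rw [smul_inv_smul₀ hτ.ne', add_sub_cancel]⟩
  obtain ⟨⟨hLAC, hLMC⟩, hLAΓC, hLMΓC⟩ : (2 * LA ≤ C ∧ √(8 * LM) ≤ C) ∧ LAΓ ≤ C ∧ 2 * √LMΓ ≤ C := by
    simpa only [max_le_iff] using hC
  have hC₀ : 0 ≤ C := by linarith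
  have hLMΓC' : 4 * LMΓ ≤ C ^ 2 :=
    calc 4 * LMΓ = (2 * √LMΓ) ^ 2 := by rw [mul_pow, Real.sq_sqrt hLMΓ]; norm_num
      _ ≤ C ^ 2 := by gcongr
  simp only [add_sub_cancel_left, inv_smul_smul₀ hτ.ne'] at hscheme₁ hscheme₂
  have hLipΩ₁ := hLipΩ τ 0 (Sum.elim (x₀ + τ • d) p₀) (Sum.elim x₀ p₀)
  have hLipΓ₁ := hLipΓ τ 0 (p₀ + τ • p) p₀
  have hd := elim_add_smul_sub_elim τ x₀ d p₀ 0
  rw [smul_zero, add_zero] at hd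
  rw [sub_zero, sq_abs, hd, vecNormSq_smul, vecNormSq_smul] at hLipΩ₁
  rw [sub_zero, sq_abs, add_sub_cancel_left, vecNormSq_smul, vecNormSq_smul] at hLipΓ₁
  have herror := increment_error_le hM hA hMΓ hAΓ hτ (by positivity) hmass hinv hLΩ hLA hLM hLAΓ
    hLMΓ hLAC ((Real.sqrt_le_left hC₀).1 hLMC) hLAΓC hLMΓC' hLipΩ₁ hLipΓ₁
    (inner_error_equation hscheme₁ hcons₁) (boundary_error_equation hscheme₂ hcons₂)
  have hβ : τ * (αΩ + cinv / h ^ 2) * (cM * h) = cM * αΩ * τ * h + cM * cinv * τ / h := by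
    field_simp
  rw [elim_add_smul_sub_elim, add_sub_cancel_left, inv_smul_smul₀ hτ.ne', vecNormSq_smul,
    vecNormSq_smul, ← hβ]
  linear_combination τ * herror

/-- **Local error of the first step for semi-linear problems (Lemma A.2).** -/
theorem lie_splitting_local_error_semilinear
    (N₁ N₂ : ℕ) (hN₁ : 0 < N₁) (hN₂ : 0 < N₂)
    (M₁₁ A₁₁ : Matrix (Fin N₁) (Fin N₁) ℝ)
    (M₁₂ A₁₂ : Matrix (Fin N₁) (Fin N₂) ℝ)
    (M₂₁ A₂₁ : Matrix (Fin N₂) (Fin N₁) ℝ)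
    (M₂₂ A₂₂ MΓ AΓ : Matrix (Fin N₂) (Fin N₂) ℝ)
    (hM : (Matrix.fromBlocks M₁₁ M₁₂ M₂₁ M₂₂).PosDef)
    (hA : (Matrix.fromBlocks A₁₁ A₁₂ A₂₁ A₂₂).PosSemidef)
    (hM21 : M₂₁ = M₁₂ᵀ) (hA21 : A₂₁ = A₁₂ᵀ)
    (hMΓ : MΓ.PosDef) (hAΓ : AΓ.PosSemidef)
    -- constants
    (τ h cM cinv αΩ : ℝ)
    (hτ : 0 < τ) (hh : 0 < h) (hcM : 0 < cM) (hcinv : 0 < cinv) (hαΩ : 0 ≤ αΩ)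
    -- boundary mass estimate and inverse estimate
    (hmass : ∀ z : Fin N₂ → ℝ, vecNormSq M₂₂ z ≤ cM * h * vecNormSq MΓ z)
    (hinv : ∀ z : Fin N₂ → ℝ, vecNormSq A₂₂ z ≤ (αΩ + cinv / h ^ 2) * vecNormSq M₂₂ z)
    -- weak CFL condition
    (hCFL : 7 * cinv * cM * τ < 3 * h)
    -- the semi-linear right-hand sides and their Lipschitz constants
    (fΩ : ℝ → (Fin N₁ ⊕ Fin N₂ → ℝ) → (Fin N₁ ⊕ Fin N₂ → ℝ))
    (fΓ : ℝ → (Fin N₂ → ℝ) → (Fin N₂ → ℝ))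
    (LΩ LA LM LΓ LAΓ LMΓ : ℝ)
    (hLΩ : 0 ≤ LΩ) (hLA : 0 ≤ LA) (hLM : 0 ≤ LM)
    (hLΓ : 0 ≤ LΓ) (hLAΓ : 0 ≤ LAΓ) (hLMΓ : 0 ≤ LMΓ)
    (hLipΩ : ∀ (t t' : ℝ) (u u' : Fin N₁ ⊕ Fin N₂ → ℝ),
      vecNormSq (Matrix.fromBlocks M₁₁ M₁₂ M₂₁ M₂₂)⁻¹ (fΩ t u - fΩ t' u') ≤
        LΩ * |t - t'| ^ 2
          + LA * vecNormSq (Matrix.fromBlocks A₁₁ A₁₂ A₂₁ A₂₂) (u - u')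
          + LM * vecNormSq (Matrix.fromBlocks M₁₁ M₁₂ M₂₁ M₂₂) (u - u'))
    (hLipΓ : ∀ (t t' : ℝ) (q q' : Fin N₂ → ℝ),
      vecNormSq MΓ⁻¹ (fΓ t q - fΓ t' q') ≤
        LΓ * |t - t'| ^ 2 + LAΓ * vecNormSq AΓ (q - q') + LMΓ * vecNormSq MΓ (q - q'))
    -- the discrete sequences
    (u₁ : ℕ → Fin N₁ → ℝ) (p dtp : ℕ → Fin N₂ → ℝ)
    (hdtp : ∀ n : ℕ, dtp (n + 1) = τ⁻¹ • (p (n + 1) - p n))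
    -- the semi-linear Lie splitting scheme
    (hscheme₁ : ∀ n : ℕ,
      M₁₁.mulVec (τ⁻¹ • (u₁ (n + 1) - u₁ n)) + A₁₁.mulVec (u₁ (n + 1)) =
        (fun i => fΩ ((n + 1) * τ) (Sum.elim (u₁ (n + 1)) (p n)) (Sum.inl i))
          - M₁₂.mulVec (dtp n) - A₁₂.mulVec (p n))
    (hscheme₂ : ∀ n : ℕ,
      MΓ.mulVec (dtp (n + 1)) + AΓ.mulVec (p (n + 1)) =
        fΓ ((n + 1) * τ) (p (n + 1))
          + (fun j => fΩ ((n + 1) * τ) (Sum.elim (u₁ (n + 1)) (p n)) (Sum.inr j))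
          - M₂₂.mulVec (dtp n) - A₂₂.mulVec (p n)
          - M₂₁.mulVec (τ⁻¹ • (u₁ (n + 1) - u₁ n)) - A₂₁.mulVec (u₁ (n + 1)))
    -- consistent initial data: u̇₁(0) and ṗ(0)
    (du₁0 : Fin N₁ → ℝ) (dp0 : Fin N₂ → ℝ)
    (hcons₁ : M₁₁.mulVec du₁0 + M₁₂.mulVec dp0 + A₁₁.mulVec (u₁ 0) + A₁₂.mulVec (p 0) =
      fun i => fΩ 0 (Sum.elim (u₁ 0) (p 0)) (Sum.inl i))
    (hcons₂ : M₂₁.mulVec du₁0 + (M₂₂ + MΓ).mulVec dp0 + A₂₁.mulVec (u₁ 0)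
        + (A₂₂ + AΓ).mulVec (p 0) =
      (fun j => fΩ 0 (Sum.elim (u₁ 0) (p 0)) (Sum.inr j)) + fΓ 0 (p 0))
    -- ∂_τ p⁰ = ṗ(0)
    (hinit : dtp 0 = dp0) :
    (1 - 2 * τ * max (max (2 * LA) (Real.sqrt (8 * LM))) (max LAΓ (2 * Real.sqrt LMΓ)))
        * vecNormSq
            (Matrix.fromBlocks A₁₁ A₁₂ A₂₁ A₂₂
              + etaConst LA LM • Matrix.fromBlocks M₁₁ M₁₂ M₂₁ M₂₂)
            (Sum.elim (u₁ 1) (p 1) - Sum.elim (u₁ 0) (p 0))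
      + (1 - 2 * τ * max (max (2 * LA) (Real.sqrt (8 * LM))) (max LAΓ (2 * Real.sqrt LMΓ)))
          * vecNormSq (AΓ + etaConst (LAΓ / 2) (LMΓ / 2) • MΓ) (p 1 - p 0)
      + τ * (1 - cM * h * (1 + 8 * τ ^ 2 * LM)
            - ((cM * αΩ) * τ * h + (cM * cinv) * τ / h) * (2 + 8 * τ ^ 2 * LA))
          * vecNormSq MΓ (dtp 1 - dp0)
    ≤ τ ^ 2 * vecNormSq
          (Matrix.fromBlocks A₁₁ A₁₂ A₂₁ A₂₂
            + etaConst LA LM • Matrix.fromBlocks M₁₁ M₁₂ M₂₁ M₂₂)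
          (Sum.elim du₁0 dp0)
      + τ ^ 2 * vecNormSq (AΓ + etaConst (LAΓ / 2) (LMΓ / 2) • MΓ) dp0
      + 2 * τ ^ 2 * vecNormSq A₂₂ dp0
      + 4 * τ ^ 3 * max (max (2 * LA) (Real.sqrt (8 * LM))) (max LAΓ (2 * Real.sqrt LMΓ))
          * vecNormSq (A₂₂ + etaConst LA LM • M₂₂) dp0
      + 2 * τ ^ 3 * (LΩ + LΓ) := by
  refine le_trans ?_ (lie_splitting_local_error_semilinear_general hM hA hMΓ hAΓ hτ hh hcinv.le hαΩ
    hmass hinv hLΩ hLA hLM hLAΓ hLMΓ hLipΩ hLipΓ le_rfl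
    (by simpa [Function.comp_def, hinit] using hscheme₁ 0)
    (by simpa [Function.comp_def, hdtp, hinit] using hscheme₂ 0) hcons₁ hcons₂)
  rw [hdtp 0]
  have := LieSplitting.vecNormSq_nonneg hMΓ.posSemidef (τ⁻¹ • (p 1 - p 0) - dp0)
  gcongr
  exact le_add_of_nonneg_right (by positivity)
end

section
/- Lower bound on the angles of a quasi-uniform triangle (from the proof of Lemma 3.1, case d = 2): Let ϑ ≥ 2 be a real number and let α₁, α₂, α₃ be positive real numbers with α₁ + α₂ + α₃ = π. If cos α₁ + cos α₂ + cos α₃ ≥ 1 + 1/ϑ, then for each i = 1, 2, 3 one has α_i ≥ 2·arcsin( 1/2 − (1/2)·√(1 − 2/ϑ) ). -/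
open Real

/-! Fix one angle `a` and put `s = sin (a / 2)`. The other two angles `b`, `c` satisfy
`cos b + cos c = 2 s cos ((b - c) / 2) ≤ 2 s`, with equality for an isosceles triangle, so the
cosine sum is at most `1 + 2 s (1 - s)`. Hence `1 / ϑ ≤ 2 s (1 - s)`, and `s` is at least the
smaller root `1/2 - (1/2) √(1 - 2/ϑ)` of this quadratic inequality. -/

section CosineSum

variable {a b c : ℝ}

theorem cos_add_cos_add_cos_of_add_eq_pi (hsum : a + b + c = π) :
    cos a + cos b + cos c = 1 + 2 * sin (a / 2) * (cos ((b - c) / 2) - sin (a / 2)) := by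
  have cos_a : cos a = 1 - 2 * sin (a / 2) ^ 2 := by
    rw [← cos_two_mul_eq_one_sub, mul_div_cancel₀ a two_ne_zero]
  have cos_b_add_cos_c : cos b + cos c = 2 * sin (a / 2) * cos ((b - c) / 2) := by
    rw [cos_add_cos, show (b + c) / 2 = π / 2 - a / 2 by linarith, cos_pi_div_two_sub]
  linear_combination cos_a + cos_b_add_cos_c

theorem cos_add_cos_add_cos_le_of_add_eq_pi (ha : 0 ≤ sin (a / 2)) (hsum : a + b + c = π) :
    cos a + cos b + cos c ≤ 1 + 2 * sin (a / 2) * (1 - sin (a / 2)) := by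
  rw [cos_add_cos_add_cos_of_add_eq_pi hsum]
  gcongr
  exact cos_le_one _

end CosineSum

theorem half_sub_half_sqrt_le_of_le_two_mul_mul_one_sub {ρ s : ℝ} (h : ρ ≤ 2 * s * (1 - s)) :
    1 / 2 - 1 / 2 * √(1 - 2 * ρ) ≤ s := by
  have le_sqrt : 1 - 2 * s ≤ √(1 - 2 * ρ) := le_sqrt_of_sq_le (by linarith)
  linarith

theorem two_mul_arcsin_le_angle_of_le_cos_add_cos_add_cos {ρ a b c : ℝ} (ha : 0 ≤ a)
    (hsum : a + b + c = π) (hcos : 1 + ρ ≤ cos a + cos b + cos c) :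
    2 * arcsin (1 / 2 - 1 / 2 * √(1 - 2 * ρ)) ≤ a := by
  suffices arcsin (1 / 2 - 1 / 2 * √(1 - 2 * ρ)) ≤ a / 2 by linarith
  rcases le_or_gt π a with hπ | hπ
  · exact (arcsin_le_pi_div_two _).trans (by gcongr)
  · have sin_nonneg : 0 ≤ sin (a / 2) := sin_nonneg_of_nonneg_of_le_pi (by linarith) (by linarith)
    have le_quadratic : ρ ≤ 2 * sin (a / 2) * (1 - sin (a / 2)) := by
      linarith [cos_add_cos_add_cos_le_of_add_eq_pi sin_nonneg hsum]
    exact (arcsin_le_iff_le_sin' ⟨by linarith, by linarith⟩).mpr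
      (half_sub_half_sqrt_le_of_le_two_mul_mul_one_sub le_quadratic)

/-- **Lower bound on the angles of a quasi-uniform triangle**
(from the proof of Lemma 3.1, case `d = 2`). If the angles `α₁, α₂, α₃` of a triangle
satisfy `cos α₁ + cos α₂ + cos α₃ ≥ 1 + 1/ϑ` with `ϑ ≥ 2`, then every angle is bounded
from below by `2 arcsin(1/2 − (1/2)√(1 − 2/ϑ))`. -/
theorem quasi_uniform_angle_lower_bound
    (ϑ : ℝ) (hϑ : 2 ≤ ϑ)
    (α₁ α₂ α₃ : ℝ) (h₁ : 0 < α₁) (h₂ : 0 < α₂) (h₃ : 0 < α₃)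
    (hsum : α₁ + α₂ + α₃ = Real.pi)
    (hcos : 1 + 1 / ϑ ≤ Real.cos α₁ + Real.cos α₂ + Real.cos α₃) :
    2 * Real.arcsin (1 / 2 - (1 / 2) * Real.sqrt (1 - 2 / ϑ)) ≤ α₁ ∧
    2 * Real.arcsin (1 / 2 - (1 / 2) * Real.sqrt (1 - 2 / ϑ)) ≤ α₂ ∧
    2 * Real.arcsin (1 / 2 - (1 / 2) * Real.sqrt (1 - 2 / ϑ)) ≤ α₃ := by
  rw [show 2 / ϑ = 2 * (1 / ϑ) by ring]
  exact ⟨two_mul_arcsin_le_angle_of_le_cos_add_cos_add_cos h₁.le hsum hcos,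
    two_mul_arcsin_le_angle_of_le_cos_add_cos_add_cos (b := α₁) (c := α₃) h₂.le
      (by linarith) (by linarith),
    two_mul_arcsin_le_angle_of_le_cos_add_cos_add_cos (b := α₁) (c := α₂) h₃.le
      (by linarith) (by linarith)⟩
end
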